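/- arXiv:2110.09069 — 3 statements merged into one kernel-verified Lean document; each statement's English description precedes it below -/
import Mathlib

section
/- Let V be a finite set with |V| ≥ 1, let w : V → V → ℝ≥0 satisfy w(x,x) = 0 for all x ∈ V, let u ∈ V, let d ≥ 2 be an integer and let S ⊆ V be nonempty. Then f(S, u, d) equals the minimum of the (finite, nonempty) set { w(u,v) + f(S \ {u}, v, d−1) : v ∈ V } ∪ { f(S', u, d) + f(S \ S', u, d) : ∅ ≠ S' ⊊ S }. -/
open scoped NNReal

/-- An arc set `A ⊆ V × V` covers `(S, u, d)` if every vertex of `S` is reachable from `u`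
by a directed walk of length at most `d` all of whose arcs belong to `A`. -/
def Covers {V : Type*} (A : Set (V × V)) (S : Set V) (u : V) (d : ℕ) : Prop :=
  ∀ v ∈ S, ∃ n ≤ d, ∃ p : ℕ → V, p 0 = u ∧ p n = v ∧ ∀ i < n, (p i, p (i + 1)) ∈ A

/-- `steinerF w S u d` is the minimum of `∑_{(x,y) ∈ A} w x y` over all arc sets
`A ⊆ V × V` covering `(S, u, d)`. -/
noncomputable def steinerF {V : Type*} [Fintype V] (w : V → V → ℝ≥0)
    (S : Finset V) (u : V) (d : ℕ) : ℝ≥0 :=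
  sInf {c : ℝ≥0 | ∃ A : Finset (V × V), Covers (↑A) (↑S) u d ∧ c = ∑ a ∈ A, w a.1 a.2}

/-!
The right-hand side is an upper bound because covers can be extended by an arc at the root and
united. For the converse, the root itself is a terminal that costs nothing, so let `u ∉ S`. Take an
optimal arc set `A`, let `v` be the second vertex of a shortest walk from `u` to some terminal, and
let `B` be the set of vertices that shortest walks from `u` can reach through `v`. A shortest walk
through `v` to a vertex of `B` stays in `B` after leaving `u`, while a shortest walk to a vertex
outside `B` never meets `B`. Hence the arcs of `A` with head in `B` cover `S ∩ B`, and those with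
head outside `B` cover `S \ B`. If `S ⊆ B`, then `A` without the arc `(u, v)` covers `S` from `v`.
-/

section Walks

variable {V : Type*} {A A' : Set (V × V)} {u v x : V} {n : ℕ}

/-- There is a directed walk from `u` to `x` of length exactly `n` with arcs in `A`. The walk is
encoded as in `Covers`, so that `Covers A S u d` unfolds to `∀ x ∈ S, ∃ n ≤ d, HasWalk A u n x`. -/
def HasWalk (A : Set (V × V)) (u : V) (n : ℕ) (x : V) : Prop :=
  ∃ p : ℕ → V, p 0 = u ∧ p n = x ∧ ∀ i < n, (p i, p (i + 1)) ∈ A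

namespace HasWalk

theorem mono (hA : A ⊆ A') : HasWalk A u n x → HasWalk A' u n x :=
  fun ⟨p, hp0, hpn, hp⟩ => ⟨p, hp0, hpn, fun i hi => hA (hp i hi)⟩

theorem refl (A : Set (V × V)) (u : V) : HasWalk A u 0 u :=
  ⟨fun _ => u, rfl, rfl, by simp⟩

theorem eq_of_zero : HasWalk A u 0 x → u = x :=
  fun ⟨_, hp0, hpn, _⟩ => hp0.symm.trans hpn

theorem cons (huv : (u, v) ∈ A) : HasWalk A v n x → HasWalk A u (n + 1) x := by
  rintro ⟨p, rfl, hpn, hp⟩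
  refine ⟨fun i => i.casesOn u p, rfl, hpn, ?_⟩
  rintro (_ | i) hi
  · exact huv
  · exact hp i (Nat.lt_of_succ_lt_succ hi)

theorem exists_cons : HasWalk A u (n + 1) x → ∃ v, (u, v) ∈ A ∧ HasWalk A v n x := by
  rintro ⟨p, rfl, hpn, hp⟩
  exact ⟨p 1, hp 0 n.succ_pos, fun i => p (i + 1), rfl, hpn,
    fun i hi => hp (i + 1) (Nat.succ_lt_succ hi)⟩

theorem snoc (hvx : (v, x) ∈ A) : HasWalk A u n v → HasWalk A u (n + 1) x := by
  rintro ⟨p, rfl, rfl, hp⟩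
  refine ⟨Function.update p (n + 1) x, by simp, by simp, fun i hi => ?_⟩
  rcases Nat.lt_succ_iff_lt_or_eq.mp hi with hin | rfl
  · simpa [hi.ne, hin.ne] using hp i hin
  · simpa using hvx

theorem exists_snoc : HasWalk A u (n + 1) x → ∃ v, HasWalk A u n v ∧ (v, x) ∈ A := by
  rintro ⟨p, hp0, rfl, hp⟩
  exact ⟨p n, ⟨p, hp0, rfl, fun i hi => hp i (hi.trans n.lt_succ_self)⟩, hp n n.lt_succ_self⟩

theorem exists_isLeast (h : HasWalk A u n x) : ∃ m ≤ n, IsLeast {k | HasWalk A u k x} m :=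
  have hleast := isLeast_csInf ⟨n, h⟩
  ⟨_, hleast.2 h, hleast⟩

end HasWalk

/-- The vertices that some shortest walk from `u` in `A` reaches through the out-neighbour `v`
of `u`. When `(u, v) ∈ A`, the condition says that a walk from `v` to `x` preceded by the arc
`(u, v)` is a shortest walk from `u`. -/
def geodesicBranch (A : Set (V × V)) (u v : V) : Set V :=
  {x | ∃ m, HasWalk A v m x ∧ m + 1 ∈ lowerBounds {n | HasWalk A u n x}}

theorem root_notMem_geodesicBranch : u ∉ geodesicBranch A u v := by
  rintro ⟨m, -, hmin⟩
  exact absurd (hmin (HasWalk.refl A u)) (by simp)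

theorem mem_geodesicBranch_self (huv : u ≠ v) : v ∈ geodesicBranch A u v := by
  refine ⟨0, HasWalk.refl A v, ?_⟩
  rintro (_ | n) hn
  · exact absurd hn.eq_of_zero huv
  · simp

theorem ne_of_mem_geodesicBranch (hx : x ∈ geodesicBranch A u v) : u ≠ v := by
  rintro rfl
  obtain ⟨m, hm, hmin⟩ := hx
  exact (hmin hm).not_gt m.lt_succ_self

theorem exists_mem_geodesicBranch (hux : u ≠ x) (h : HasWalk A u n x) :
    ∃ v, (u, v) ∈ A ∧ x ∈ geodesicBranch A u v := by
  obtain ⟨_ | m, -, hm, hmin⟩ := h.exists_isLeast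
  · exact absurd hm.eq_of_zero hux
  · obtain ⟨v, huv, hvx⟩ := hm.exists_cons
    exact ⟨v, huv, m, hvx, hmin⟩

theorem HasWalk.within_geodesicBranch {m : ℕ} (h : HasWalk A v m x)
    (hmin : m + 1 ∈ lowerBounds {n | HasWalk A u n x}) :
    HasWalk {a ∈ A | a.1 ∈ geodesicBranch A u v ∧ a.2 ∈ geodesicBranch A u v} v m x := by
  induction m generalizing x with
  | zero => exact h.eq_of_zero ▸ HasWalk.refl _ v
  | succ m ih =>
    obtain ⟨y, hvy, hyx⟩ := h.exists_snoc
    have hmin_y : m + 1 ∈ lowerBounds {n | HasWalk A u n y} :=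
      fun n hn => Nat.le_of_succ_le_succ (hmin (hn.snoc hyx))
    exact (ih hvy hmin_y).snoc ⟨hyx, ⟨m, hvy, hmin_y⟩, ⟨m + 1, h, hmin⟩⟩

theorem HasWalk.avoiding_geodesicBranch (h : IsLeast {k | HasWalk A u k x} n)
    (hx : x ∉ geodesicBranch A u v) :
    HasWalk {a ∈ A | a.2 ∉ geodesicBranch A u v} u n x := by
  induction n generalizing x with
  | zero => exact HasWalk.eq_of_zero h.1 ▸ HasWalk.refl _ u
  | succ n ih =>
    obtain ⟨hux, hmin⟩ := h
    obtain ⟨y, huy, hyx⟩ := HasWalk.exists_snoc hux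
    have hleast_y : IsLeast {k | HasWalk A u k y} n :=
      ⟨huy, fun k hk => Nat.le_of_succ_le_succ (hmin (HasWalk.snoc hyx hk))⟩
    have hy : y ∉ geodesicBranch A u v := by
      rintro ⟨m, hvy, hmin_y⟩
      exact hx ⟨m + 1, hvy.snoc hyx,
        fun k hk => (Nat.succ_le_succ (hmin_y huy)).trans (hmin hk)⟩
    exact (ih hleast_y hy).snoc ⟨hyx, hx⟩

end Walks

namespace Covers

variable {V : Type*} {A A' : Set (V × V)} {S S' : Set V} {u v : V} {d : ℕ}

theorem anti (h : Covers A S u d) (hS : S' ⊆ S) : Covers A S' u d :=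
  fun x hx => h x (hS hx)

theorem union (h : Covers A S u d) (h' : Covers A' S' u d) : Covers (A ∪ A') (S ∪ S') u d := by
  rintro x (hx | hx)
  · obtain ⟨n, hn, hwalk⟩ := h x hx
    exact ⟨n, hn, HasWalk.mono Set.subset_union_left hwalk⟩
  · obtain ⟨n, hn, hwalk⟩ := h' x hx
    exact ⟨n, hn, HasWalk.mono Set.subset_union_right hwalk⟩

theorem of_subset_singleton (hS : S ⊆ {u}) : Covers A S u d := by
  intro x hx
  obtain rfl : x = u := hS hx
  exact ⟨0, d.zero_le, HasWalk.refl A x⟩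

theorem univ (hd : 0 < d) : Covers Set.univ S u d :=
  fun x _ => ⟨1, hd, HasWalk.cons (Set.mem_univ (u, x)) (HasWalk.refl _ x)⟩

theorem insert_arc (h : Covers A (S \ {u}) v d) : Covers (insert (u, v) A) S u (d + 1) := by
  intro x hx
  by_cases hxu : x = u
  · exact hxu ▸ ⟨0, Nat.zero_le _, HasWalk.refl _ x⟩
  · obtain ⟨n, hn, hwalk⟩ := h x ⟨hx, hxu⟩
    exact ⟨n + 1, Nat.succ_le_succ hn, HasWalk.cons (Set.mem_insert _ _)
      (HasWalk.mono (Set.subset_insert _ _) hwalk)⟩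

theorem sdiff_arc_of_subset_geodesicBranch (h : Covers A S u (d + 1))
    (hS : S ⊆ geodesicBranch A u v) : Covers (A \ {(u, v)}) S v d := by
  intro x hx
  obtain ⟨n, hn, hux⟩ := h x hx
  obtain ⟨m, hvx, hmin⟩ := hS hx
  refine ⟨m, Nat.le_of_succ_le_succ ((hmin hux).trans hn),
    (hvx.within_geodesicBranch hmin).mono ?_⟩
  rintro a ⟨ha, htail, -⟩
  refine ⟨ha, ?_⟩
  rintro rfl
  exact root_notMem_geodesicBranch htail

theorem inter_geodesicBranch (h : Covers A S u d) (huv : (u, v) ∈ A) :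
    Covers {a ∈ A | a.2 ∈ geodesicBranch A u v} (S ∩ geodesicBranch A u v) u d := by
  rintro x ⟨hxS, hxB⟩
  obtain ⟨n, hn, hux⟩ := h x hxS
  have hv : v ∈ geodesicBranch A u v := mem_geodesicBranch_self (ne_of_mem_geodesicBranch hxB)
  obtain ⟨m, hvx, hmin⟩ := hxB
  exact ⟨m + 1, (hmin hux).trans hn, HasWalk.cons ⟨huv, hv⟩
    ((hvx.within_geodesicBranch hmin).mono fun _ ha => ⟨ha.1, ha.2.2⟩)⟩

theorem sdiff_geodesicBranch (h : Covers A S u d) :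
    Covers {a ∈ A | a.2 ∉ geodesicBranch A u v} (S \ geodesicBranch A u v) u d := by
  rintro x ⟨hxS, hxB⟩
  obtain ⟨n, hn, hux⟩ := h x hxS
  obtain ⟨m, hm, hleast⟩ := HasWalk.exists_isLeast hux
  exact ⟨m, hm.trans hn, HasWalk.avoiding_geodesicBranch hleast hxB⟩

end Covers

section SteinerF

variable {V : Type*} [Fintype V] {w : V → V → ℝ≥0} {S T : Finset V} {u v : V} {d : ℕ}

theorem steinerF_le_sum {A : Finset (V × V)} (hA : Covers (A : Set (V × V)) S u d) :
    steinerF w S u d ≤ ∑ a ∈ A, w a.1 a.2 :=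
  csInf_le' ⟨A, hA, rfl⟩

theorem exists_covers_steinerF_eq_sum (w : V → V → ℝ≥0) (S : Finset V) (u : V) (hd : 0 < d) :
    ∃ A : Finset (V × V), Covers (A : Set (V × V)) S u d ∧
      steinerF w S u d = ∑ a ∈ A, w a.1 a.2 := by
  let costs : Set ℝ≥0 :=
    {c | ∃ A : Finset (V × V), Covers (A : Set (V × V)) S u d ∧ c = ∑ a ∈ A, w a.1 a.2}
  have hne : costs.Nonempty :=
    ⟨_, Finset.univ, by simpa only [Finset.coe_univ] using Covers.univ hd, rfl⟩
  have hfin : costs.Finite := by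
    refine (Set.finite_range fun A : Finset (V × V) => ∑ a ∈ A, w a.1 a.2).subset ?_
    rintro _ ⟨A, -, rfl⟩
    exact ⟨A, rfl⟩
  exact hne.csInf_mem hfin

theorem steinerF_mono (hST : S ⊆ T) (hd : 0 < d) : steinerF w S u d ≤ steinerF w T u d := by
  obtain ⟨A, hA, hsum⟩ := exists_covers_steinerF_eq_sum w T u hd
  exact hsum ▸ steinerF_le_sum (hA.anti (Finset.coe_subset.mpr hST))

theorem steinerF_eq_zero_of_subset_singleton (hS : S ⊆ {u}) : steinerF w S u d = 0 := by
  have hcov : Covers ((∅ : Finset (V × V)) : Set (V × V)) S u d :=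
    Covers.of_subset_singleton (by exact_mod_cast hS)
  simpa using steinerF_le_sum (w := w) hcov

theorem add_steinerF_le_sum_of_subset_geodesicBranch {A : Finset (V × V)}
    (hA : Covers (A : Set (V × V)) S u (d + 1)) (huv : (u, v) ∈ A)
    (hS : (S : Set V) ⊆ geodesicBranch A u v) :
    w u v + steinerF w S v d ≤ ∑ a ∈ A, w a.1 a.2 := by
  classical
  have hcov : Covers ((A.erase (u, v) : Finset (V × V)) : Set (V × V)) S v d := by
    simpa only [Finset.coe_erase] using hA.sdiff_arc_of_subset_geodesicBranch hS
  rw [← Finset.add_sum_erase A _ huv]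
  gcongr
  exact steinerF_le_sum hcov

variable [DecidableEq V]

theorem steinerF_union_le (w : V → V → ℝ≥0) (S T : Finset V) (u : V) (hd : 0 < d) :
    steinerF w (S ∪ T) u d ≤ steinerF w S u d + steinerF w T u d := by
  obtain ⟨A, hA, hAsum⟩ := exists_covers_steinerF_eq_sum w S u hd
  obtain ⟨B, hB, hBsum⟩ := exists_covers_steinerF_eq_sum w T u hd
  have hcov : Covers ((A ∪ B : Finset (V × V)) : Set (V × V)) (S ∪ T : Finset V) u d := by
    simpa only [Finset.coe_union] using hA.union hB
  calc steinerF w (S ∪ T) u d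
      ≤ ∑ a ∈ A ∪ B, w a.1 a.2 := steinerF_le_sum hcov
    _ ≤ ∑ a ∈ A ∪ B, w a.1 a.2 + ∑ a ∈ A ∩ B, w a.1 a.2 := le_self_add
    _ = steinerF w S u d + steinerF w T u d := by rw [Finset.sum_union_inter, hAsum, hBsum]

theorem steinerF_succ_le_add_erase (w : V → V → ℝ≥0) (S : Finset V) (u v : V) (hd : 0 < d) :
    steinerF w S u (d + 1) ≤ w u v + steinerF w (S.erase u) v d := by
  obtain ⟨A, hA, hsum⟩ := exists_covers_steinerF_eq_sum w (S.erase u) v hd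
  have hcov : Covers ((insert (u, v) A : Finset (V × V)) : Set (V × V)) S u (d + 1) := by
    rw [Finset.coe_erase] at hA
    simpa only [Finset.coe_insert] using hA.insert_arc
  calc steinerF w S u (d + 1)
      ≤ ∑ a ∈ insert (u, v) A, w a.1 a.2 := steinerF_le_sum hcov
    _ = w u v + ∑ a ∈ A.erase (u, v), w a.1 a.2 := by
      rw [← Finset.add_sum_erase _ _ (Finset.mem_insert_self _ _), Finset.erase_insert_eq_erase]
    _ ≤ w u v + ∑ a ∈ A, w a.1 a.2 := by
      gcongr
      exact Finset.erase_subset _ _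
    _ = w u v + steinerF w (S.erase u) v d := by rw [hsum]

theorem steinerF_filter_geodesicBranch_add_steinerF_sdiff_le_sum {A : Finset (V × V)}
    [DecidablePred (· ∈ geodesicBranch (A : Set (V × V)) u v)]
    (hA : Covers (A : Set (V × V)) S u d) (huv : (u, v) ∈ A) :
    steinerF w {x ∈ S | x ∈ geodesicBranch A u v} u d +
      steinerF w (S \ {x ∈ S | x ∈ geodesicBranch A u v}) u d ≤ ∑ a ∈ A, w a.1 a.2 := by
  rw [← Finset.sum_filter_add_sum_filter_not A (fun a => a.2 ∈ geodesicBranch A u v),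
    ← Finset.filter_not]
  gcongr <;> apply steinerF_le_sum <;> rw [Finset.coe_filter, Finset.coe_filter]
  · exact hA.inter_geodesicBranch huv
  · exact hA.sdiff_geodesicBranch

theorem exists_add_steinerF_le_or_exists_split_le_of_notMem (w : V → V → ℝ≥0) (hu : u ∉ S)
    (hS : S.Nonempty) :
    (∃ v, w u v + steinerF w S v d ≤ steinerF w S u (d + 1)) ∨
      ∃ S' ⊂ S, S'.Nonempty ∧
        steinerF w S' u (d + 1) + steinerF w (S \ S') u (d + 1) ≤ steinerF w S u (d + 1) := by
  classical
  obtain ⟨A, hA, hsum⟩ := exists_covers_steinerF_eq_sum w S u d.succ_pos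
  obtain ⟨s, hs⟩ := hS
  obtain ⟨n, -, hwalk⟩ := hA s hs
  obtain ⟨v, huv, hsB⟩ := exists_mem_geodesicBranch (ne_of_mem_of_not_mem hs hu).symm hwalk
  rw [hsum]
  by_cases hSB : ∀ x ∈ S, x ∈ geodesicBranch A u v
  · exact .inl ⟨v, add_steinerF_le_sum_of_subset_geodesicBranch hA huv hSB⟩
  · exact .inr ⟨_, Finset.filter_ssubset.mpr (by simpa using hSB),
      ⟨s, Finset.mem_filter.mpr ⟨hs, hsB⟩⟩,
      steinerF_filter_geodesicBranch_add_steinerF_sdiff_le_sum hA huv⟩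

theorem exists_add_steinerF_erase_le_or_exists_split_le (hw : w u u = 0) (hS : S.Nonempty) :
    (∃ v, w u v + steinerF w (S.erase u) v d ≤ steinerF w S u (d + 1)) ∨
      ∃ S' ⊂ S, S'.Nonempty ∧
        steinerF w S' u (d + 1) + steinerF w (S \ S') u (d + 1) ≤ steinerF w S u (d + 1) := by
  by_cases hu : u ∈ S
  · rcases eq_or_ne S {u} with rfl | hSu
    · left
      exact ⟨u, by simp [hw, steinerF_eq_zero_of_subset_singleton]⟩
    · right
      refine ⟨{u}, (Finset.singleton_subset_iff.mpr hu).ssubset_of_ne hSu.symm,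
        Finset.singleton_nonempty u, ?_⟩
      rw [steinerF_eq_zero_of_subset_singleton subset_rfl, zero_add]
      exact steinerF_mono Finset.sdiff_subset d.succ_pos
  · rw [Finset.erase_eq_of_notMem hu]
    exact exists_add_steinerF_le_or_exists_split_le_of_notMem w hu hS

end SteinerF

/-- The dynamic-programming recurrence for the diameter-constrained directed Steiner tree:
for `d ≥ 2` and nonempty `S ⊆ T`,
`f(S,u,d) = min ( min_{v ∈ V} (w(u,v) + f(S∖{u},v,d-1)),
                  min_{∅ ≠ S' ⊊ S} (f(S',u,d) + f(S∖S',u,d)) )`. -/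
theorem diameter_constrained_steiner_DP_recurrence
    {V : Type*} [Fintype V] [DecidableEq V] [Nonempty V]
    (w : V → V → ℝ≥0) (hw : ∀ x, w x x = 0)
    (u : V) (d : ℕ) (hd : 2 ≤ d) (S : Finset V) (hS : S.Nonempty) :
    steinerF w S u d =
      sInf ((Set.range fun v : V => w u v + steinerF w (S.erase u) v (d - 1)) ∪
        {x : ℝ≥0 | ∃ S' : Finset V, S'.Nonempty ∧ S' ⊂ S ∧
          x = steinerF w S' u d + steinerF w (S \ S') u d}) := by
  obtain ⟨d, rfl⟩ : ∃ e, d = e + 1 := ⟨d - 1, by omega⟩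
  have hd_pos : 0 < d := by omega
  rw [Nat.add_sub_cancel]
  apply le_antisymm
  · refine le_csInf ⟨_, .inl ⟨u, rfl⟩⟩ ?_
    rintro _ (⟨v, rfl⟩ | ⟨S', -, hS', rfl⟩)
    · exact steinerF_succ_le_add_erase w S u v hd_pos
    · simpa only [Finset.union_sdiff_of_subset hS'.subset] using
        steinerF_union_le w S' (S \ S') u d.succ_pos
  · obtain ⟨v, hv⟩ | ⟨S', hS', hne, hle⟩ :=
      exists_add_steinerF_erase_le_or_exists_split_le (d := d) (hw u) hS
    · exact (csInf_le' (.inl ⟨v, rfl⟩)).trans hv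
    · exact (csInf_le' (.inr ⟨S', hne, hS', rfl⟩)).trans hle
end

section
/- Let H be a tree whose set P of internal vertices is nonempty with |P| ≤ α, let β ≥ 1, and let N be a finite set of vertices disjoint from V(H) with |N| = α·β. Then there exists a tree H'' on vertex set V(H) ∪ N that contains H as a subgraph, in which every vertex of N is a leaf adjacent to some vertex of P, every vertex of P has degree at least β in H'', and the set of leaves of H'' is exactly (leaves of H) ∪ N. -/
/-!
Split the new vertices into blocks, one for each internal vertex of the tree and each of size at
least `β`, and join every new vertex to the internal vertex of its block. Joining new vertices by
one edge each keeps a tree a tree, because no cycle passes through a vertex with at most one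
neighbour. Only degrees of internal vertices grow, so the old leaves stay leaves and no old vertex
becomes one.
-/

open Function SimpleGraph

section Acyclic

variable {V : Type*} {G : SimpleGraph V}

theorem nontrivial_neighborSet_of_mem_support_of_isCycle {u v : V} {c : G.Walk u u}
    (hc : c.IsCycle) (hv : v ∈ c.support) : (G.neighborSet v).Nontrivial := by
  classical
  have hrot : (c.rotate v hv).IsCycle := hc.rotate hv
  exact ⟨_, (c.rotate v hv).adj_snd hrot.not_nil,
    _, ((c.rotate v hv).adj_penultimate hrot.not_nil).symm, hrot.snd_ne_penultimate⟩

theorem isAcyclic_of_isAcyclic_induce {s : Set V} (hs : (G.induce s).IsAcyclic)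
    (hsub : ∀ v ∉ s, (G.neighborSet v).Subsingleton) : G.IsAcyclic := by
  intro u c hc
  have hcs : ∀ v ∈ c.support, v ∈ s := fun v hv ↦ by
    by_contra hvs
    exact Set.not_subsingleton_iff.mpr (nontrivial_neighborSet_of_mem_support_of_isCycle hc hv)
      (hsub v hvs)
  refine hs (c.induce s hcs) ?_
  rwa [← Walk.isCycle_map_iff_of_injective (f := (Embedding.induce s).toHom)
    Subtype.val_injective, Walk.map_induce]

end Acyclic

/-- The graph obtained from `H` by adding the elements of `N` as new vertices, each new vertex `n`
being joined to the vertex `f n` of `H` and to nothing else. The disjoint union of the old and the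
new vertices is encoded as `V ⊕ N`. -/
def attachLeaves {V N : Type*} (H : SimpleGraph V) (f : N → V) : SimpleGraph (V ⊕ N) where
  Adj
    | .inl u, .inl v => H.Adj u v
    | .inl v, .inr n => f n = v
    | .inr n, .inl v => f n = v
    | .inr _, .inr _ => False
  symm := ⟨by rintro (u | n) (v | m) h <;> first | exact h | exact H.adj_symm h⟩
  loopless := ⟨by rintro (v | n) h; exacts [H.irrefl h, h]⟩

namespace attachLeaves

variable {V N : Type*} {H : SimpleGraph V} {f : N → V}

theorem neighborSet_inl (v : V) :
    (attachLeaves H f).neighborSet (.inl v) =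
      Sum.inl '' H.neighborSet v ∪ Sum.inr '' (f ⁻¹' {v}) := by
  ext (u | n) <;> simp [attachLeaves]

theorem neighborSet_inr (n : N) :
    (attachLeaves H f).neighborSet (.inr n) = {.inl (f n)} := by
  ext (u | m) <;> simp [attachLeaves, eq_comm]

theorem ncard_neighborSet_inl [Finite N] (v : V) [Fintype (H.neighborSet v)] :
    ((attachLeaves H f).neighborSet (.inl v)).ncard = H.degree v + (f ⁻¹' {v}).ncard := by
  rw [neighborSet_inl, Set.ncard_union_eq Set.disjoint_image_inl_image_inr,
    Set.ncard_image_of_injective _ Sum.inl_injective,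
    Set.ncard_image_of_injective _ Sum.inr_injective, ← card_neighborSet_eq_degree,
    Set.fintypeCard_eq_ncard]

variable (H f) in
/-- The inclusion of `H` into `attachLeaves H f`, as an induced subgraph. -/
def inlEmbedding : H ↪g attachLeaves H f where
  toEmbedding := .inl
  map_rel_iff' := .rfl

theorem connected (hH : H.Connected) : (attachLeaves H f).Connected := by
  obtain ⟨root⟩ := hH.nonempty
  have reachable_root_inl (v : V) : (attachLeaves H f).Reachable (.inl root) (.inl v) :=
    (hH root v).map (inlEmbedding H f).toHom
  refine connected_iff_exists_forall_reachable _ |>.mpr ⟨.inl root, ?_⟩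
  rintro (v | n)
  · exact reachable_root_inl v
  · have adj_inr : (attachLeaves H f).Adj (.inl (f n)) (.inr n) := rfl
    exact (reachable_root_inl (f n)).trans adj_inr.reachable

theorem isAcyclic (hH : H.IsAcyclic) : (attachLeaves H f).IsAcyclic := by
  refine isAcyclic_of_isAcyclic_induce (s := Set.range (inlEmbedding H f))
    ((inlEmbedding H f).isoInduceRange.isAcyclic_iff.mp hH) ?_
  rintro (v | n) hv
  · exact absurd ⟨v, rfl⟩ hv
  · exact neighborSet_inr n ▸ Set.subsingleton_singleton

theorem isTree (hH : H.IsTree) : (attachLeaves H f).IsTree :=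
  ⟨connected hH.connected, isAcyclic hH.isAcyclic⟩

theorem ncard_neighborSet_inl_eq_one_iff [Finite N] [H.LocallyFinite]
    (hf : ∀ n, 2 ≤ H.degree (f n)) (v : V) :
    ((attachLeaves H f).neighborSet (.inl v)).ncard = 1 ↔ H.degree v = 1 := by
  rw [ncard_neighborSet_inl]
  rcases (f ⁻¹' {v}).eq_empty_or_nonempty with hempty | ⟨n, rfl⟩
  · simp [hempty]
  · have := hf n
    lia

theorem setOf_ncard_neighborSet_eq_one [Finite N] [H.LocallyFinite]
    (hf : ∀ n, 2 ≤ H.degree (f n)) :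
    {x | ((attachLeaves H f).neighborSet x).ncard = 1} =
      Sum.inl '' {v | H.degree v = 1} ∪ Set.range Sum.inr := by
  ext (v | n)
  · rw [Set.mem_ofPred_eq, ncard_neighborSet_inl_eq_one_iff hf]
    simp
  · simp [neighborSet_inr]

end attachLeaves

theorem exists_forall_le_ncard_fiber {ι N : Type*} [Finite ι] [Nonempty ι] [Finite N] {β : ℕ}
    (hcard : Nat.card ι * β ≤ Nat.card N) :
    ∃ f : N → ι, ∀ i, β ≤ (f ⁻¹' {i}).ncard := by
  have hcard' : Nat.card (ι × Fin β) ≤ Nat.card N := by simpa using hcard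
  obtain ⟨e⟩ : Nonempty (ι × Fin β ↪ N) := by
    have := Fintype.ofFinite ι
    have := Fintype.ofFinite N
    exact Embedding.nonempty_of_card_le (by simpa only [Nat.card_eq_fintype_card] using hcard')
  let f : N → ι := extend e Prod.fst fun _ ↦ Classical.arbitrary ι
  refine ⟨f, fun i ↦ ?_⟩
  have hblock : Set.range (fun b : Fin β ↦ e (i, b)) ⊆ f ⁻¹' {i} := by
    rintro _ ⟨b, rfl⟩
    exact e.injective.extend_apply _ _ (i, b)
  calc
    β = (Set.range fun b : Fin β ↦ e (i, b)).ncard := by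
      have hinj : Injective fun b : Fin β ↦ e (i, b) :=
        e.injective.comp (Prod.mk_right_injective i)
      rw [Set.ncard_range_of_injective hinj, Nat.card_fin]
    _ ≤ (f ⁻¹' {i}).ncard := Set.ncard_le_ncard hblock

theorem attach_leaves_to_internal_vertices_general {V N : Type*} [Finite N]
    (H : SimpleGraph V) [H.LocallyFinite] (hH : H.IsTree)
    (P : Finset V) (hP : P.Nonempty) (hdeg : ∀ p ∈ P, 2 ≤ H.degree p)
    (β : ℕ) (hcard : P.card * β ≤ Nat.card N) :
    ∃ H'' : SimpleGraph (V ⊕ N),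
      H''.IsTree ∧
      (∀ x y : V, H.Adj x y → H''.Adj (Sum.inl x) (Sum.inl y)) ∧
      (∀ n : N, ∃ p ∈ P, H''.neighborSet (Sum.inr n) = {Sum.inl p}) ∧
      (∀ p ∈ P, β ≤ (H''.neighborSet (Sum.inl p)).ncard) ∧
      {x : V ⊕ N | (H''.neighborSet x).ncard = 1} =
        Sum.inl '' {v : V | H.degree v = 1} ∪ Set.range Sum.inr := by
  have : Nonempty P := hP.to_subtype
  obtain ⟨f, hf⟩ : ∃ f : N → P, ∀ p, β ≤ (f ⁻¹' {p}).ncard :=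
    exists_forall_le_ncard_fiber (by simpa using hcard)
  refine ⟨attachLeaves H (fun n ↦ f n), attachLeaves.isTree hH, fun _ _ hxy ↦ hxy,
    fun n ↦ ⟨f n, (f n).2, attachLeaves.neighborSet_inr n⟩, fun p hp ↦ ?_,
    attachLeaves.setOf_ncard_neighborSet_eq_one fun n ↦ hdeg _ (f n).2⟩
  have hfiber : (fun n ↦ (f n : V)) ⁻¹' {p} = f ⁻¹' {⟨p, hp⟩} := by
    ext n
    simp [Subtype.ext_iff]
  calc
    β ≤ (f ⁻¹' {⟨p, hp⟩}).ncard := hf ⟨p, hp⟩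
    _ ≤ H.degree p + (f ⁻¹' {⟨p, hp⟩}).ncard := Nat.le_add_left _ _
    _ = _ := by rw [attachLeaves.ncard_neighborSet_inl, hfiber]

/-- Attaching new leaves: given a tree `H` whose set `P` of internal vertices is nonempty
with `|P| ≤ α`, and a disjoint set `N` of `α·β` new vertices (`β ≥ 1`), there is a tree
`H''` on `V(H) ⊕ N` containing `H`, in which each vertex of `N` is a leaf attached to some
internal vertex of `H`, each internal vertex of `H` has degree at least `β`, and the leaves
of `H''` are exactly the leaves of `H` together with `N`. -/
theorem attach_leaves_to_internal_vertices
    {V N : Type*} [Fintype V] [Fintype N]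
    (H : SimpleGraph V) [DecidableRel H.Adj] (hH : H.IsTree)
    (α β : ℕ) (hβ : 1 ≤ β)
    (hP : (Finset.univ.filter fun v : V => 2 ≤ H.degree v).Nonempty)
    (hPα : (Finset.univ.filter fun v : V => 2 ≤ H.degree v).card ≤ α)
    (hN : Fintype.card N = α * β) :
    ∃ H'' : SimpleGraph (V ⊕ N),
      H''.IsTree ∧
      (∀ x y : V, H.Adj x y → H''.Adj (Sum.inl x) (Sum.inl y)) ∧
      (∀ n : N, ∃ p : V, 2 ≤ H.degree p ∧
        H''.neighborSet (Sum.inr n) = {Sum.inl p}) ∧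
      (∀ p : V, 2 ≤ H.degree p → β ≤ (H''.neighborSet (Sum.inl p)).ncard) ∧
      {x : V ⊕ N | (H''.neighborSet x).ncard = 1} =
        Sum.inl '' {v : V | H.degree v = 1} ∪ Set.range Sum.inr := by
  simpa using attach_leaves_to_internal_vertices_general (N := N) H hH _ hP (by simp) β
    (by simpa [hN] using Nat.mul_le_mul_right β hPα)
end

section
/- Let a, b, c be affinely independent points of the Euclidean plane such that each of the angles ∠bac, ∠abc, ∠acb is strictly less than 2π/3. Then there exists a point s with ∠asb = ∠bsc = ∠csa = 2π/3, and this point satisfies dist(s,a) + dist(s,b) + dist(s,c) ≤ dist(x,a) + dist(x,b) + dist(x,c) for every point x of the plane. -/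
open EuclideanGeometry Real

/-!
The function `x ↦ ∑ i, dist x (p i)` is convex, and away from the points `p i` its gradient at `s`
is minus the sum `g` of the unit vectors from `s` towards the `p i`. Hence `s` minimizes it exactly
when `g = 0`, and a further point placed at `s` keeps `s` a minimizer exactly when `‖g‖ ≤ 1`. For
three points the first condition says that the unit vectors pairwise make the angle `2π/3`; for two
points `b`, `c` seen from the vertex `a` the second says `2π/3 ≤ ∠ b a c`. So a minimizer over the
plane of the triangle, which exists by compactness, is not a vertex and sees the sides under `2π/3`,
and by convexity it then minimizes over the whole space.
-/

open NormedSpace InnerProductGeometry Filter Topology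
open scoped RealInnerProductSpace

section Normalize

variable {V : Type*} [NormedAddCommGroup V] [NormedSpace ℝ V]

lemma continuousAt_normalize {v : V} (hv : v ≠ 0) : ContinuousAt (normalize : V → V) v :=
  (continuousAt_id.norm.inv₀ (norm_ne_zero_iff.mpr hv)).smul continuousAt_id

lemma norm_normalize_le_one (v : V) : ‖normalize v‖ ≤ 1 := by
  by_cases hv : v = 0
  · simp [hv]
  · exact (norm_normalize hv).le

end Normalize

section UnitVectors

variable {V : Type*} [NormedAddCommGroup V] [InnerProductSpace ℝ V]

lemma inner_normalize_self (v : V) : ⟪normalize v, v⟫ = ‖v‖ := by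
  by_cases hv : v = 0
  · simp [hv]
  · rw [NormedSpace.normalize, real_inner_smul_left, real_inner_self_eq_norm_sq]
    field_simp

lemma inner_normalize_le_norm (v w : V) : ⟪normalize v, w⟫ ≤ ‖w‖ :=
  (real_inner_le_norm _ _).trans
    (mul_le_of_le_one_left (norm_nonneg w) (norm_normalize_le_one v))

lemma cos_two_pi_div_three : cos (2 * π / 3) = -1 / 2 := by
  rw [show 2 * π / 3 = π - π / 3 by ring, cos_pi_sub, cos_pi_div_three]
  norm_num

lemma two_pi_div_three_mem_Icc : 2 * π / 3 ∈ Set.Icc 0 π :=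
  ⟨by positivity, by linarith [pi_pos]⟩

lemma angle_mem_Icc (x y : V) : InnerProductGeometry.angle x y ∈ Set.Icc 0 π :=
  ⟨angle_nonneg x y, angle_le_pi x y⟩

lemma norm_add_sq_of_norm_eq_one {x y : V} (hx : ‖x‖ = 1) (hy : ‖y‖ = 1) :
    ‖x + y‖ ^ 2 = 2 + 2 * cos (InnerProductGeometry.angle x y) := by
  rw [norm_add_sq_real, inner_eq_cos_angle_of_norm_eq_one hx hy, hx, hy]
  ring

lemma norm_add_le_one_iff_two_pi_div_three_le_angle {x y : V} (hx : ‖x‖ = 1) (hy : ‖y‖ = 1) :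
    ‖x + y‖ ≤ 1 ↔ 2 * π / 3 ≤ InnerProductGeometry.angle x y := by
  rw [← strictAntiOn_cos.le_iff_ge (angle_mem_Icc x y) two_pi_div_three_mem_Icc,
    cos_two_pi_div_three, ← sq_le_one_iff₀ (norm_nonneg _), norm_add_sq_of_norm_eq_one hx hy]
  constructor <;> intro h <;> linarith

lemma norm_add_eq_one_iff_angle_eq_two_pi_div_three {x y : V} (hx : ‖x‖ = 1) (hy : ‖y‖ = 1) :
    ‖x + y‖ = 1 ↔ InnerProductGeometry.angle x y = 2 * π / 3 := by
  rw [← injOn_cos.eq_iff (angle_mem_Icc x y) two_pi_div_three_mem_Icc,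
    cos_two_pi_div_three, ← pow_eq_one_iff_of_nonneg (norm_nonneg _) two_ne_zero,
    norm_add_sq_of_norm_eq_one hx hy]
  constructor <;> intro h <;> linarith

lemma angle_eq_two_pi_div_three_of_add_add_eq_zero {x y z : V} (hx : ‖x‖ = 1) (hy : ‖y‖ = 1)
    (hz : ‖z‖ = 1) (h : x + y + z = 0) : InnerProductGeometry.angle x y = 2 * π / 3 := by
  rw [← norm_add_eq_one_iff_angle_eq_two_pi_div_three hx hy, eq_neg_of_add_eq_zero_left h,
    norm_neg, hz]

lemma add_add_eq_zero_iff_angle_eq_two_pi_div_three {x y z : V} (hx : ‖x‖ = 1) (hy : ‖y‖ = 1)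
    (hz : ‖z‖ = 1) :
    x + y + z = 0 ↔
      InnerProductGeometry.angle x y = 2 * π / 3 ∧ InnerProductGeometry.angle y z = 2 * π / 3 ∧
        InnerProductGeometry.angle z x = 2 * π / 3 := by
  constructor
  · intro h
    have hyzx : y + z + x = 0 := by rw [← h]; abel
    have hzxy : z + x + y = 0 := by rw [← h]; abel
    exact ⟨angle_eq_two_pi_div_three_of_add_add_eq_zero hx hy hz h,
      angle_eq_two_pi_div_three_of_add_add_eq_zero hy hz hx hyzx,
      angle_eq_two_pi_div_three_of_add_add_eq_zero hz hx hy hzxy⟩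
  · rintro ⟨hxy, hyz, hzx⟩
    have hsq : ‖x + y + z‖ ^ 2 = 0 := by
      rw [norm_add_sq_real, inner_add_left, norm_add_sq_of_norm_eq_one hx hy,
        real_inner_comm z x, inner_eq_cos_angle_of_norm_eq_one hz hx,
        inner_eq_cos_angle_of_norm_eq_one hy hz, hxy, hyz, hzx, cos_two_pi_div_three, hz]
      norm_num
    exact norm_eq_zero.mp (sq_eq_zero_iff.mp hsq)

end UnitVectors

section SumOfDistances

variable {V P ι : Type*} [NormedAddCommGroup V] [InnerProductSpace ℝ V] [MetricSpace P]
  [NormedAddTorsor V P] [Fintype ι]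

lemma sum_dist_le_sum_dist_add_inner (p : ι → P) (x y : P) :
    ∑ i, dist x (p i) ≤ ∑ i, dist y (p i) + ⟪∑ i, normalize (p i -ᵥ x), y -ᵥ x⟫ := by
  rw [sum_inner, ← Finset.sum_add_distrib]
  refine Finset.sum_le_sum fun i _ ↦ ?_
  calc dist x (p i) = ⟪normalize (p i -ᵥ x), p i -ᵥ y⟫ + ⟪normalize (p i -ᵥ x), y -ᵥ x⟫ := by
        rw [← inner_add_right, vsub_add_vsub_cancel, inner_normalize_self, dist_comm,
          dist_eq_norm_vsub V]
    _ ≤ dist y (p i) + ⟪normalize (p i -ᵥ x), y -ᵥ x⟫ := by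
        gcongr
        rw [dist_comm, dist_eq_norm_vsub V]
        exact inner_normalize_le_norm _ _

lemma tendsto_sum_normalize_vsub {p : ι → P} {s : P} (hp : ∀ i, p i ≠ s) (d : V) :
    Tendsto (fun t : ℝ ↦ ∑ i, normalize (p i -ᵥ (t • d +ᵥ s))) (𝓝 0)
      (𝓝 (∑ i, normalize (p i -ᵥ s))) := by
  refine tendsto_finsetSum _ fun i _ ↦
    (continuousAt_normalize (vsub_ne_zero.mpr (hp i))).tendsto.comp ?_
  have hcont : Continuous fun t : ℝ ↦ p i -ᵥ (t • d +ᵥ s) := by fun_prop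
  simpa using hcont.tendsto 0

-- Compare `s` with `s + t • g` for `g` the sum of unit vectors, using the subgradient at the latter
-- point, and let `t` tend to zero.
lemma norm_sum_normalize_vsub_le {p : ι → P} {s : P} {k : ℝ} (hp : ∀ i, p i ≠ s)
    (hk : 0 ≤ k) (hs : ∀ x, ∑ i, dist s (p i) ≤ ∑ i, dist x (p i) + k * dist x s) :
    ‖∑ i, normalize (p i -ᵥ s)‖ ≤ k := by
  set g := ∑ i, normalize (p i -ᵥ s)
  have hbound : ∀ t : ℝ, 0 < t →
      ⟪∑ i, normalize (p i -ᵥ (t • g +ᵥ s)), g⟫ ≤ k * ‖g‖ := by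
    intro t ht
    have hsub := sum_dist_le_sum_dist_add_inner p (t • g +ᵥ s) s
    have hmin := hs (t • g +ᵥ s)
    rw [vsub_vadd_eq_vsub_sub, vsub_self, zero_sub, inner_neg_right, inner_smul_right] at hsub
    rw [dist_vadd_left, norm_smul, norm_of_nonneg ht.le] at hmin
    exact le_of_mul_le_mul_left (by linarith) ht
  have hlim : Tendsto (fun t : ℝ ↦ ⟪∑ i, normalize (p i -ᵥ (t • g +ᵥ s)), g⟫) (𝓝[>] 0)
      (𝓝 ⟪g, g⟫) :=
    ((tendsto_sum_normalize_vsub hp g).mono_left nhdsWithin_le_nhds).inner tendsto_const_nhds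
  have hgg : ‖g‖ * ‖g‖ ≤ k * ‖g‖ := by
    rw [← real_inner_self_eq_norm_mul_norm]
    exact le_of_tendsto hlim (eventually_nhdsWithin_of_forall hbound)
  obtain hg0 | hgpos := (norm_nonneg g).eq_or_lt
  · rwa [← hg0]
  · exact le_of_mul_le_mul_right hgg hgpos

theorem forall_sum_dist_le_add_iff {p : ι → P} {s : P} {k : ℝ} (hp : ∀ i, p i ≠ s) (hk : 0 ≤ k) :
    (∀ x, ∑ i, dist s (p i) ≤ ∑ i, dist x (p i) + k * dist x s) ↔
      ‖∑ i, normalize (p i -ᵥ s)‖ ≤ k := by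
  refine ⟨fun hs ↦ norm_sum_normalize_vsub_le hp hk hs, fun hnorm x ↦ ?_⟩
  calc ∑ i, dist s (p i) ≤ ∑ i, dist x (p i) + ⟪∑ i, normalize (p i -ᵥ s), x -ᵥ s⟫ :=
        sum_dist_le_sum_dist_add_inner p s x
    _ ≤ ∑ i, dist x (p i) + k * dist x s := by
        rw [dist_eq_norm_vsub V x s]
        gcongr
        exact (real_inner_le_norm _ _).trans (by gcongr)

theorem forall_sum_dist_le_iff {p : ι → P} {s : P} (hp : ∀ i, p i ≠ s) :
    (∀ x, ∑ i, dist s (p i) ≤ ∑ i, dist x (p i)) ↔ ∑ i, normalize (p i -ᵥ s) = 0 := by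
  simpa using forall_sum_dist_le_add_iff hp le_rfl

end SumOfDistances

lemma properSpace_of_finiteDimensional_torsor (V P : Type*) [NormedAddCommGroup V]
    [NormedSpace ℝ V] [FiniteDimensional ℝ V] [PseudoMetricSpace P] [NormedAddTorsor V P] :
    ProperSpace P :=
  have : ProperSpace V := FiniteDimensional.proper ℝ V
  let e : V ≃ᵢ P := IsometryEquiv.vaddConst (Classical.arbitrary P)
  e.isometry.antilipschitz.properSpace e.continuous e.surjective

lemma exists_forall_sum_dist_le {X ι : Type*} [PseudoMetricSpace X] [ProperSpace X] [Nonempty X]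
    [Fintype ι] (p : ι → X) : ∃ s, ∀ x, ∑ i, dist s (p i) ≤ ∑ i, dist x (p i) := by
  cases isEmpty_or_nonempty ι
  · simp
  have i₀ : ι := Classical.arbitrary ι
  have hcont : Continuous fun x ↦ ∑ i, dist x (p i) := by fun_prop
  refine hcont.exists_forall_le (tendsto_atTop_mono (fun x ↦ ?_)
    (tendsto_dist_right_cocompact_atTop (p i₀)))
  exact Finset.single_le_sum (f := fun i ↦ dist x (p i)) (fun i _ ↦ dist_nonneg)
    (Finset.mem_univ i₀)

section FermatPoint

variable {V P : Type*} [NormedAddCommGroup V] [InnerProductSpace ℝ V] [MetricSpace P]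
  [NormedAddTorsor V P] {a b c s : P}

theorem forall_dist_add_dist_add_dist_le_iff_angle_eq (ha : a ≠ s) (hb : b ≠ s) (hc : c ≠ s) :
    (∀ x, dist s a + dist s b + dist s c ≤ dist x a + dist x b + dist x c) ↔
      ∠ a s b = 2 * π / 3 ∧ ∠ b s c = 2 * π / 3 ∧ ∠ c s a = 2 * π / 3 := by
  have hp : ∀ i, ![a, b, c] i ≠ s := by simp [Fin.forall_fin_succ, ha, hb, hc]
  have hunit {q : P} (hq : q ≠ s) : ‖normalize (q -ᵥ s)‖ = 1 := norm_normalize (vsub_ne_zero.mpr hq)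
  have hcrit := forall_sum_dist_le_iff hp
  simp only [Fin.sum_univ_three, Matrix.cons_val] at hcrit
  rw [hcrit, add_add_eq_zero_iff_angle_eq_two_pi_div_three (hunit ha) (hunit hb) (hunit hc)]
  simp only [angle_normalize_left, angle_normalize_right, EuclideanGeometry.angle]

theorem forall_dist_add_dist_le_iff_le_angle (hb : b ≠ a) (hc : c ≠ a) :
    (∀ x, dist a b + dist a c ≤ dist x a + dist x b + dist x c) ↔ 2 * π / 3 ≤ ∠ b a c := by
  have hp : ∀ i, ![b, c] i ≠ a := by simp [Fin.forall_fin_succ, hb, hc]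
  have hunit {q : P} (hq : q ≠ a) : ‖normalize (q -ᵥ a)‖ = 1 := norm_normalize (vsub_ne_zero.mpr hq)
  have hcrit := forall_sum_dist_le_add_iff hp zero_le_one
  simp only [Fin.sum_univ_two, Matrix.cons_val, one_mul] at hcrit
  rw [norm_add_le_one_iff_two_pi_div_three_le_angle (hunit hb) (hunit hc), angle_normalize_left,
    angle_normalize_right] at hcrit
  simpa only [EuclideanGeometry.angle, add_comm, add_left_comm] using hcrit

lemma ne_of_forall_dist_add_dist_add_dist_le (hb : b ≠ a) (hc : c ≠ a) (hA : ∠ b a c < 2 * π / 3)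
    (hs : ∀ x, dist s a + dist s b + dist s c ≤ dist x a + dist x b + dist x c) : a ≠ s := by
  rintro rfl
  refine hA.not_ge ((forall_dist_add_dist_le_iff_le_angle hb hc).mp ?_)
  simpa using hs

theorem exists_angle_eq_two_pi_div_three_of_properSpace [ProperSpace P]
    (hab : a ≠ b) (hac : a ≠ c) (hbc : b ≠ c)
    (hA : ∠ b a c < 2 * π / 3) (hB : ∠ a b c < 2 * π / 3) (hC : ∠ a c b < 2 * π / 3) :
    ∃ s : P, (a ≠ s ∧ b ≠ s ∧ c ≠ s) ∧
      ∠ a s b = 2 * π / 3 ∧ ∠ b s c = 2 * π / 3 ∧ ∠ c s a = 2 * π / 3 := by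
  have : Nonempty P := ⟨a⟩
  obtain ⟨s, hs⟩ := exists_forall_sum_dist_le ![a, b, c]
  simp only [Fin.sum_univ_three, Matrix.cons_val] at hs
  have ha : a ≠ s := ne_of_forall_dist_add_dist_add_dist_le hab.symm hac.symm hA hs
  have hb : b ≠ s := ne_of_forall_dist_add_dist_add_dist_le hab hbc.symm hB fun x ↦ by
    linarith [hs x]
  have hc : c ≠ s := ne_of_forall_dist_add_dist_add_dist_le hac hbc hC fun x ↦ by
    linarith [hs x]
  exact ⟨s, ⟨ha, hb, hc⟩, (forall_dist_add_dist_add_dist_le_iff_angle_eq ha hb hc).mp hs⟩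

theorem fermat_point_of_small_angles_general (hab : a ≠ b) (hac : a ≠ c) (hbc : b ≠ c)
    (hA : ∠ b a c < 2 * π / 3) (hB : ∠ a b c < 2 * π / 3) (hC : ∠ a c b < 2 * π / 3) :
    ∃ s : P, ∠ a s b = 2 * π / 3 ∧ ∠ b s c = 2 * π / 3 ∧ ∠ c s a = 2 * π / 3 ∧
      ∀ x : P, dist s a + dist s b + dist s c ≤ dist x a + dist x b + dist x c := by
  obtain ⟨S, haS, hbS, hcS, hfin⟩ :
      ∃ S : AffineSubspace ℝ P, a ∈ S ∧ b ∈ S ∧ c ∈ S ∧ FiniteDimensional ℝ S.direction :=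
    ⟨affineSpan ℝ {a, b, c}, mem_affineSpan ℝ (by simp), mem_affineSpan ℝ (by simp),
      mem_affineSpan ℝ (by simp), finiteDimensional_direction_affineSpan_of_finite ℝ (by simp)⟩
  lift a to S using haS
  lift b to S using hbS
  lift c to S using hcS
  have : Nonempty S := ⟨a⟩
  have : ProperSpace S := properSpace_of_finiteDimensional_torsor S.direction S
  norm_cast at hab hac hbc hA hB hC
  obtain ⟨s, ⟨ha, hb, hc⟩, hasb, hbsc, hcsa⟩ :=
    exists_angle_eq_two_pi_div_three_of_properSpace hab hac hbc hA hB hC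
  rw [← AffineSubspace.angle_coe] at hasb hbsc hcsa
  exact ⟨s, hasb, hbsc, hcsa, (forall_dist_add_dist_add_dist_le_iff_angle_eq
    (Subtype.coe_ne_coe.mpr ha) (Subtype.coe_ne_coe.mpr hb)
    (Subtype.coe_ne_coe.mpr hc)).mpr ⟨hasb, hbsc, hcsa⟩⟩

end FermatPoint

/-- If all angles of a (nondegenerate) triangle `abc` in the Euclidean plane are strictly
less than `2π/3`, then there is a point `s` at which the three vertices subtend pairwise
angles of exactly `2π/3`, and this Fermat point minimizes the total distance to the three
vertices. -/
theorem fermat_point_of_small_angles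
    (a b c : EuclideanSpace ℝ (Fin 2))
    (hind : AffineIndependent ℝ ![a, b, c])
    (hA : ∠ b a c < 2 * π / 3)
    (hB : ∠ a b c < 2 * π / 3)
    (hC : ∠ a c b < 2 * π / 3) :
    ∃ s : EuclideanSpace ℝ (Fin 2),
      ∠ a s b = 2 * π / 3 ∧ ∠ b s c = 2 * π / 3 ∧ ∠ c s a = 2 * π / 3 ∧
      ∀ x : EuclideanSpace ℝ (Fin 2),
        dist s a + dist s b + dist s c ≤ dist x a + dist x b + dist x c := by
  exact fermat_point_of_small_angles_general (hind.injective.ne (by decide : (0 : Fin 3) ≠ 1))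
    (hind.injective.ne (by decide : (0 : Fin 3) ≠ 2))
    (hind.injective.ne (by decide : (1 : Fin 3) ≠ 2)) hA hB hC
end
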